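/- arXiv:0708.0400 — 2 statements merged into one kernel-verified Lean document; each statement's English description precedes it below -/
import Mathlib

section
/- (Proposition 2 of the paper) The quantity ν_F = ν_F^{(0)} + ν^{(1)}/8 - ν^{(2)}/24 is invariant under general coordinate transformations, i.e. it is a scalar, even if the line bundle connection F is not flat. In particular, under an arbitrary infinitesimal coordinate transformation δΓ^A = X^A, the three constituents vary as δν_F^{(0)} = -(1/2)Δ_1 div_1 X, δν^{(1)} = 4Δ_1 div_1 X + (-1)^{ε_A}(∂_C E^{AB})(∂_B ∂_A X^C), and δν^{(2)} = 3(-1)^{ε_A}(∂_C E^{AB})(∂_B ∂_A X^C), so that δν_F = 0. -/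
/-!
The anomalous variation `δ̄ = δv + X^C ∂_C` (`anom`) obeys the ungraded Leibniz rule and satisfies
`δ̄ ∂_i = ∂_i δ̄ - (∂_i X^C) ∂_C` (`anom_mul`, `anom_D`). Applied to a polynomial in `E`, `E⁻¹`, `F`
and their derivatives, it therefore yields the linear tensor terms, which cancel because all
indices are contracted, and terms in which second or third derivatives of `X` survive.

* For `ν_F^{(0)}` (`anom_nuF0`), the vector `V^A = E^{AB} F_B` has anomaly `-E^{AB} ∂_B div_1 X`.
  The contributions linear in `F` cancel through the symmetry of the pairing
  `(-1)^{ε_A} F_A E^{AB} G_B` (`pair_symm`).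
* For `ν^{(1)}` (`anom_nu1`), skewsymmetry makes the two halves of `δ̄E` contribute equally, and
  `div_transport` rewrites the divergence of each half.
* For `ν^{(2)}` (`anom_nu2`), four terms with second derivatives of `X` remain. In two of them
  `E` and `E⁻¹` contract at once, each giving the anomaly `anomJ`. The other two are equal
  to each other; as `∂_D ∂_P X^B` is graded symmetric in `D, P`, the Jacobi identity turns their
  sum into a term where `E⁻¹` contracts with `E`, which is a third copy (`jacTerm_add`).

The Jacobi identity for the components `E^{AB}` is the bracket Jacobi identity on the coordinate
functions (`jacobi_components`). Signs are carried as `sgn p` with `p` a polynomial in the parities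
over `ZMod 2`, so each sign comparison is a finite check.
-/

open scoped BigOperators

noncomputable section

/-- The sign `(-1)^p` for a parity `p : ZMod 2`, valued in `ℚ`. -/
def sgn (p : ZMod 2) : ℚ := if p = 0 then 1 else -1

/-- A supercommutative algebra of "functions on a superdomain" with local coordinates
`coord i`, Grassmann parities `ε i`, and left partial derivatives `D i`. -/
structure SuperAlg (ι : Type) [Fintype ι] [DecidableEq ι]
    (A : Type) [Ring A] [Algebra ℚ A] where
  ε : ι → ZMod 2
  hom : ZMod 2 → Submodule ℚ A
  one_mem : (1 : A) ∈ hom 0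
  mul_mem : ∀ {p q : ZMod 2} {a b : A}, a ∈ hom p → b ∈ hom q → a * b ∈ hom (p + q)
  supercomm : ∀ {p q : ZMod 2} {a b : A}, a ∈ hom p → b ∈ hom q →
    a * b = sgn (p * q) • (b * a)
  D : ι → A →ₗ[ℚ] A
  D_mem : ∀ (i : ι) {p : ZMod 2} {a : A}, a ∈ hom p → D i a ∈ hom (p + ε i)
  D_leibniz : ∀ (i : ι) {p : ZMod 2} {a : A} (b : A), a ∈ hom p →
    D i (a * b) = D i a * b + sgn (ε i * p) • (a * D i b)
  D_comm : ∀ (i j : ι) (a : A), D i (D j a) = sgn (ε i * ε j) • D j (D i a)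
  coord : ι → A
  coord_mem : ∀ i, coord i ∈ hom (ε i)
  D_coord : ∀ i j, D i (coord j) = if i = j then (1 : A) else 0

namespace SuperAlg

variable {ι : Type} [Fintype ι] [DecidableEq ι]
variable {A : Type} [Ring A] [Algebra ℚ A]

/-- The operator of left multiplication by `f`. -/
def L (f : A) : A →ₗ[ℚ] A := LinearMap.mulLeft ℚ f

/-- The graded commutator `[T,U] = T∘U - (-1)^{pq} U∘T` of operators of parities `p`, `q`. -/
def gcomm (p q : ZMod 2) (T U : A →ₗ[ℚ] A) : A →ₗ[ℚ] A :=
  T ∘ₗ U - sgn (p * q) • (U ∘ₗ T)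

variable (S : SuperAlg ι A)

/-- The bracket `(f,g) = (f ∂⃖_A) M^{AB} (∂_B g)` built from the matrix `M`,
for `f` homogeneous of parity `pf`; the right derivative is expressed through
the left one via `f ∂⃖_A = (-1)^{ε_A (ε_f + 1)} ∂_A f`. -/
def brkt (M : ι → ι → A) (pf : ZMod 2) (f g : A) : A :=
  ∑ a, ∑ b, sgn (S.ε a * (pf + 1)) • (S.D a f * (M a b * S.D b g))

/-- The first-order operator `(x, ·)` (for Grassmann-odd `x`), built from the matrix `M`. -/
def Hop (M : ι → ι → A) (x : A) : A →ₗ[ℚ] A :=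
  ∑ a, ∑ b, L (S.D a x) ∘ₗ L (M a b) ∘ₗ S.D b

/-- The Laplacian `((-1)^{ε_A}/2)(∂_A + F_A) M^{AB} ∂_B`. -/
def lap (F : ι → A) (M : ι → ι → A) : A →ₗ[ℚ] A :=
  (1/2 : ℚ) • ∑ a, ∑ b, sgn (S.ε a) •
    ((S.D a ∘ₗ L (M a b) ∘ₗ S.D b) + (L (F a) ∘ₗ L (M a b) ∘ₗ S.D b))

/-- The curvature `R_{AB} = (∂_A F_B) - (-1)^{ε_A ε_B}(∂_B F_A)` of a line bundle
connection `F`. -/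
def curv (F : ι → A) (a b : ι) : A :=
  S.D a (F b) - sgn (S.ε a * S.ε b) • S.D b (F a)

/-- The raised-index curvature `R^{AD} = E^{AB} R_{BC} E^{CD} (-1)^{ε_C}`. -/
def curvUp (E : ι → ι → A) (F : ι → A) (a d : ι) : A :=
  ∑ b, ∑ c, sgn (S.ε c) • (E a b * (S.curv F b c * E c d))

/-- The graded Jacobi identity for the antibracket, on homogeneous functions. -/
def JacobiId (E : ι → ι → A) : Prop :=
  ∀ (pf pg ph : ZMod 2) (f g h : A),
    f ∈ S.hom pf → g ∈ S.hom pg → h ∈ S.hom ph →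
      sgn ((pf + 1) * (ph + 1)) • S.brkt E pf f (S.brkt E pg g h)
      + sgn ((pg + 1) * (pf + 1)) • S.brkt E pg g (S.brkt E ph h f)
      + sgn ((ph + 1) * (pg + 1)) • S.brkt E ph h (S.brkt E pf f g) = 0

/-- The closedness relation `Σ_{cycl. A,B,C} (-1)^{ε_A ε_C} (∂_A E_{BC}) = 0`
for the two-form with components `Einv`. -/
def ClosedId (Einv : ι → ι → A) : Prop :=
  ∀ a b c : ι,
    sgn (S.ε a * S.ε c) • S.D a (Einv b c)
    + sgn (S.ε b * S.ε a) • S.D b (Einv c a)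
    + sgn (S.ε c * S.ε b) • S.D c (Einv a b) = 0

/-- The Jacobi identity `Σ_{cycl. A,B,C} (-1)^{(ε_A+1)(ε_C+1)} E^{AD} (∂_D E^{BC}) = 0`
in terms of the matrix `E^{AB}`. -/
def EJacobiId (E : ι → ι → A) : Prop :=
  ∀ a b c : ι,
    ∑ d, (sgn ((S.ε a + 1) * (S.ε c + 1)) • (E a d * S.D d (E b c))
      + sgn ((S.ε b + 1) * (S.ε a + 1)) • (E b d * S.D d (E c a))
      + sgn ((S.ε c + 1) * (S.ε b + 1)) • (E c d * S.D d (E a b))) = 0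

/-- `E` is a non-degenerate graded-skewsymmetric (2,0)-tensor with inverse `Einv`. -/
structure AntiSymp (E Einv : ι → ι → A) : Prop where
  E_mem : ∀ a b, E a b ∈ S.hom (S.ε a + S.ε b + 1)
  E_skew : ∀ a b, E a b = - sgn ((S.ε a + 1) * (S.ε b + 1)) • E b a
  Einv_mem : ∀ a b, Einv a b ∈ S.hom (S.ε a + S.ε b + 1)
  Einv_skew : ∀ a b, Einv a b = - sgn (S.ε a * S.ε b) • Einv b a
  mul_inv : ∀ a c, ∑ b, E a b * Einv b c = if a = c then (1 : A) else 0
  inv_mul : ∀ a c, ∑ b, Einv a b * E b c = if a = c then (1 : A) else 0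

/-- An operator `T` of parity `pT` is of at most first order iff all its double graded
commutators with left multiplication operators vanish. -/
def IsFirstOrder (pT : ZMod 2) (T : A →ₗ[ℚ] A) : Prop :=
  ∀ (pf pg : ZMod 2) (f g : A), f ∈ S.hom pf → g ∈ S.hom pg →
    gcomm (pT + pf) pg (gcomm pT pf T (L f)) (L g) = 0

/-- The third-order terms of an operator `T` of parity `pT` vanish iff all its triple
graded commutators with left multiplication operators vanish. -/
def ThirdOrderVanish (pT : ZMod 2) (T : A →ₗ[ℚ] A) : Prop :=
  ∀ (pf pg ph : ZMod 2) (f g h : A),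
    f ∈ S.hom pf → g ∈ S.hom pg → h ∈ S.hom ph →
      gcomm (pT + pf + pg) ph
        (gcomm (pT + pf) pg (gcomm pT pf T (L f)) (L g)) (L h) = 0

/-- `ν_F^{(0)} = ((-1)^{ε_A}/4)(∂_A + F_A/2)(E^{AB} F_B)`. -/
def nuF0 (E : ι → ι → A) (F : ι → A) : A :=
  (1/4 : ℚ) • ∑ a, ∑ b, sgn (S.ε a) •
    (S.D a (E a b * F b) + (1/2 : ℚ) • (F a * (E a b * F b)))

/-- `ν^{(1)} = (-1)^{ε_A} (∂_B ∂_A E^{AB})`. -/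
def nu1 (E : ι → ι → A) : A :=
  ∑ a, ∑ b, sgn (S.ε a) • S.D b (S.D a (E a b))

/-- `ν^{(2)} = (-1)^{ε_A ε_C} (∂_D E^{AB}) E_{BC} (∂_A E^{CD})`. -/
def nu2 (E Einv : ι → ι → A) : A :=
  ∑ a, ∑ b, ∑ c, ∑ d, sgn (S.ε a * S.ε c) •
    (S.D d (E a b) * (Einv b c * S.D a (E c d)))

/-- `ν_F = ν_F^{(0)} + ν^{(1)}/8 - ν^{(2)}/24`. -/
def nuF (E Einv : ι → ι → A) (F : ι → A) : A :=
  S.nuF0 E F + (1/8 : ℚ) • S.nu1 E - (1/24 : ℚ) • S.nu2 E Einv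

/-- The divergence `div_1 X = (-1)^{ε_A} (∂_A X^A)`. -/
def div1 (X : ι → A) : A := ∑ a, sgn (S.ε a) • S.D a (X a)

/-- A form variation (infinitesimal coordinate transformation `δΓ^A = X^A`, compared
at the same argument): an even derivation commuting with the partial derivatives. -/
structure FormVar (X : ι → A) (δv : A →ₗ[ℚ] A) : Prop where
  deriv : ∀ a b : A, δv (a * b) = δv a * b + a * δv b
  commD : ∀ (i : ι) (a : A), δv (S.D i a) = S.D i (δv a)
  X_mem : ∀ i, X i ∈ S.hom (S.ε i)

/-- The form variation of a (2,0)-tensor `E^{AB}` under `δΓ^A = X^A`: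
`δE^{AB} = (X^A ∂⃖_C) E^{CB} + E^{AC}(∂_C X^B) - X^C (∂_C E^{AB})`. -/
def VarE (X : ι → A) (δv : A →ₗ[ℚ] A) (E : ι → ι → A) : Prop :=
  ∀ a b, δv (E a b) =
    (∑ c, sgn (S.ε c * (S.ε a + 1)) • (S.D c (X a) * E c b))
    + (∑ c, E a c * S.D c (X b))
    - ∑ c, X c * S.D c (E a b)

/-- The form variation of a line bundle connection `F_A` under `δΓ^A = X^A`:
`δF_A = -(∂_A X^B) F_B - ∂_A(div_1 X) - X^C (∂_C F_A)`. -/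
def VarF (X : ι → A) (δv : A →ₗ[ℚ] A) (F : ι → A) : Prop :=
  ∀ a, δv (F a) =
    - (∑ b, S.D a (X b) * F b) - S.D a (S.div1 X) - ∑ c, X c * S.D c (F a)

/-- Khudaverdian–Voronov's odd quantity
`ν(F¹;F²,E) = ((-1)^{ε_A}/4)(∂_A + (F¹_A+F²_A)/2)(E^{AB}(F¹_B - F²_B))`. -/
def nu12 (E : ι → ι → A) (F1 F2 : ι → A) : A :=
  (1/4 : ℚ) • ∑ a, ∑ b, sgn (S.ε a) •
    (S.D a (E a b * (F1 b - F2 b))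
      + (1/2 : ℚ) • ((F1 a + F2 a) * (E a b * (F1 b - F2 b))))

/-- The odd Laplacian `Δ_ρ = ((-1)^{ε_A}/(2ρ)) ∂_A ρ E^{AB} ∂_B` for a density `ρ`
with inverse `ρinv`. -/
def lapRho (E : ι → ι → A) (ρ ρinv : A) : A →ₗ[ℚ] A :=
  (1/2 : ℚ) • ∑ a, ∑ b, sgn (S.ε a) •
    (L ρinv ∘ₗ S.D a ∘ₗ L ρ ∘ₗ L (E a b) ∘ₗ S.D b)

/-- `ν_ρ^{(0)} = (Δ_1 √ρ)/√ρ`, where `sq = √ρ` and `sqinv = 1/√ρ`. -/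
def nuRho0 (E : ι → ι → A) (sq sqinv : A) : A :=
  sqinv * (S.lap (fun _ => (0 : A)) E sq)

/-- `ν_ρ = ν_ρ^{(0)} + ν^{(1)}/8 - ν^{(2)}/24`. -/
def nuRho (E Einv : ι → ι → A) (sq sqinv : A) : A :=
  S.nuRho0 E sq sqinv + (1/8 : ℚ) • S.nu1 E - (1/24 : ℚ) • S.nu2 E Einv

/-- Khudaverdian's operator `Δ_E = Δ_1 + ν^{(1)}/8 - ν^{(2)}/24`. -/
def lapE (E Einv : ι → ι → A) : A →ₗ[ℚ] A :=
  S.lap (fun _ => (0 : A)) E + L ((1/8 : ℚ) • S.nu1 E - (1/24 : ℚ) • S.nu2 E Einv)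

/-- The reordered Christoffel symbols `Γ^A{}_{BC} = (-1)^{ε_A ε_B} Γ_B{}^A{}_C`. -/
def Gup (Gm : ι → ι → ι → A) (a b c : ι) : A := sgn (S.ε a * S.ε b) • Gm b a c

/-- The reordered Riemann curvature tensor
`R^A{}_{BCD} = (-1)^{ε_A ε_B}(∂_B Γ^A{}_{CD}) + Γ^A{}_{BE} Γ^E{}_{CD} - (-1)^{ε_B ε_C}(B ↔ C)`,
expressed through the reordered Christoffel symbols `Gu = Γ^·{}_{··}`. -/
def riemRe (Gu : ι → ι → ι → A) (a b c d : ι) : A :=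
  sgn (S.ε a * S.ε b) • S.D b (Gu a c d) + (∑ e, Gu a b e * Gu e c d)
  - sgn (S.ε b * S.ε c) •
      (sgn (S.ε a * S.ε c) • S.D c (Gu a b d) + ∑ e, Gu a c e * Gu e b d)

/-- The Ricci tensor `R_{AB} = R^C{}_{CAB}`. -/
def ricci (Gu : ι → ι → ι → A) (a b : ι) : A := ∑ c, S.riemRe Gu c c a b

/-- The odd scalar curvature `R = R_{AB} E^{BA}`. -/
def scalarR (Gu : ι → ι → ι → A) (E : ι → ι → A) : A :=
  ∑ a, ∑ b, S.ricci Gu a b * E b a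

/-- The Riemann curvature tensor
`R_{AB}{}^C{}_D = (∂_A Γ_B{}^C{}_D) + (-1)^{ε_B ε_C} Γ_A{}^C{}_E Γ^E{}_{BD} - (-1)^{ε_A ε_B}(A ↔ B)`,
built from the Christoffel symbols `Gm = Γ_·{}^·{}_·`. -/
def riem (Gm : ι → ι → ι → A) (a b c d : ι) : A :=
  S.D a (Gm b c d) + sgn (S.ε b * S.ε c) • (∑ e, Gm a c e * S.Gup Gm e b d)
  - sgn (S.ε a * S.ε b) •
      (S.D b (Gm a c d) + sgn (S.ε a * S.ε c) • ∑ e, Gm b c e * S.Gup Gm e a d)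

/-- The Christoffel symbols with three lower indices,
`Γ_{ABC} = E_{AD} Γ^D{}_{BC} (-1)^{ε_B}`, built from `Gu = Γ^·{}_{··}`. -/
def Glow (Einv : ι → ι → A) (Gu : ι → ι → ι → A) (a b c : ι) : A :=
  sgn (S.ε b) • ∑ d, Einv a d * Gu d b c

/-- `γ_{ABC} = Γ_{ABC} - (1/3)(E_{AB} ∂⃖_C + E_{AC} ∂⃖_B (-1)^{ε_B ε_C})`. -/
def gam (Einv : ι → ι → A) (Gu : ι → ι → ι → A) (a b c : ι) : A :=
  S.Glow Einv Gu a b c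
  - (1/3 : ℚ) • (sgn (S.ε c * (S.ε a + S.ε b)) • S.D c (Einv a b)
      + sgn (S.ε b * S.ε c) • (sgn (S.ε b * (S.ε a + S.ε c)) • S.D b (Einv a c)))

end SuperAlg

namespace SuperAlg

/-! ### Signs and relabelling of sums -/

theorem sgn_mul (p q : ZMod 2) : sgn p * sgn q = sgn (p + q) := by
  revert p q
  unfold sgn
  intro p q
  fin_cases p <;> fin_cases q <;> simp <;> decide

theorem sgn_smul_smul {A : Type} [Ring A] [Algebra ℚ A] (p q : ZMod 2) (x : A) :
    sgn p • sgn q • x = sgn (p + q) • x := by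
  rw [smul_smul, sgn_mul]

theorem sgn_zero_eq : sgn 0 = 1 := by simp [sgn]

theorem sgn_one_eq : sgn 1 = -1 := by simp [sgn]

theorem sgn_smul_congr {A : Type} [Ring A] [Algebra ℚ A] {p q : ZMod 2} (h : p = q) (x : A) :
    sgn p • x = sgn q • x := by rw [h]

theorem sgn_smul_of_eq_zero {A : Type} [Ring A] [Algebra ℚ A] {p : ZMod 2} (h : p = 0) (x : A) :
    sgn p • x = x := by rw [h, sgn_zero_eq, one_smul]

theorem neg_sgn (p : ZMod 2) : -sgn p = sgn (p + 1) := by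
  rw [← sgn_mul, sgn_one_eq]; ring

/-- Relabelling of five summation indices along a bijection `φ` of index tuples, with a
termwise comparison of the summands. -/
theorem sum5_reindex {κ M : Type} [Fintype κ] [AddCommMonoid M] (f g : κ → κ → κ → κ → κ → M)
    (φ ψ : κ × κ × κ × κ × κ → κ × κ × κ × κ × κ)
    (h1 : ∀ x, ψ (φ x) = x) (h2 : ∀ x, φ (ψ x) = x)
    (h : ∀ a b c d p, f a b c d p = (fun y => g y.1 y.2.1 y.2.2.1 y.2.2.2.1 y.2.2.2.2)
      (φ (a, b, c, d, p))) :
    ∑ a, ∑ b, ∑ c, ∑ d, ∑ p, f a b c d p = ∑ a, ∑ b, ∑ c, ∑ d, ∑ p, g a b c d p := by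
  have hp : ∀ k : κ → κ → κ → κ → κ → M, ∑ a, ∑ b, ∑ c, ∑ d, ∑ p, k a b c d p
      = ∑ y : κ × κ × κ × κ × κ, k y.1 y.2.1 y.2.2.1 y.2.2.2.1 y.2.2.2.2 := by
    intro k
    simp only [Fintype.sum_prod_type]
  rw [hp, hp]
  exact Fintype.sum_equiv ⟨φ, ψ, h1, h2⟩ _ _ fun x => h _ _ _ _ _

/-! ### The anomalous variation -/

section Basic

variable {ι : Type} [Fintype ι] [DecidableEq ι] {A : Type} [Ring A] [Algebra ℚ A]
variable (S : SuperAlg ι A)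

theorem D_one (i : ι) : S.D i 1 = 0 := by
  have h := S.D_leibniz i (1 : A) S.one_mem
  rw [mul_zero, sgn_zero_eq] at h
  simpa using h

/-- The anomalous variation `δ̄ = δv + X^C ∂_C`, which measures the failure of a quantity to be
a scalar. -/
def anom (X : ι → A) (δv : A →ₗ[ℚ] A) : A →ₗ[ℚ] A := δv + ∑ c, L (X c) ∘ₗ S.D c

theorem anom_apply (X : ι → A) (δv : A →ₗ[ℚ] A) (a : A) :
    S.anom X δv a = δv a + ∑ c, X c * S.D c a := by
  simp [anom, L]

variable {S} {X : ι → A} {δv : A →ₗ[ℚ] A}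

/-- The anomalous variation obeys the ungraded Leibniz rule on products whose first factor is
homogeneous, because each `X^C ∂_C` is even. -/
theorem anom_mul (hX : S.FormVar X δv) {p : ZMod 2} {a : A} (b : A) (ha : a ∈ S.hom p) :
    S.anom X δv (a * b) = S.anom X δv a * b + a * S.anom X δv b := by
  have key : ∀ c, X c * S.D c (a * b) = X c * S.D c a * b + a * (X c * S.D c b) := by
    intro c
    rw [S.D_leibniz c b ha, mul_add, mul_smul_comm, ← mul_assoc, ← mul_assoc (X c) a,
      ← mul_assoc a, S.supercomm (hX.X_mem c) ha, smul_mul_assoc, sgn_smul_smul,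
      sgn_smul_of_eq_zero]
    rw [CharTwo.add_self_eq_zero]
  simp only [anom_apply, hX.deriv, key, Finset.sum_add_distrib, add_mul, mul_add,
    Finset.sum_mul, Finset.mul_sum]
  abel

theorem anom_one (hX : S.FormVar X δv) : S.anom X δv 1 = 0 := by
  have h := anom_mul hX (1 : A) S.one_mem
  simpa using h

/-- The anomalous variation fails to commute with `∂_i` exactly by the Jacobian `∂_i X^C`. -/
theorem anom_D (hX : S.FormVar X δv) (i : ι) (a : A) :
    S.anom X δv (S.D i a) = S.D i (S.anom X δv a) - ∑ c, S.D i (X c) * S.D c a := by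
  have key : ∀ c, S.D i (X c * S.D c a) = S.D i (X c) * S.D c a + X c * S.D c (S.D i a) := by
    intro c
    rw [S.D_leibniz i _ (hX.X_mem c), S.D_comm c i, mul_smul_comm, mul_comm (S.ε i)]
  simp only [anom_apply, hX.commD, map_add, map_sum, key, Finset.sum_add_distrib]
  abel

theorem anom_E {E : ι → ι → A} (hV : S.VarE X δv E) (a b : ι) :
    S.anom X δv (E a b) = (∑ c, sgn (S.ε c * (S.ε a + 1)) • (S.D c (X a) * E c b))
      + ∑ c, E a c * S.D c (X b) := by
  rw [anom_apply, hV a b]; abel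

theorem anom_F {F : ι → A} (hV : S.VarF X δv F) (a : ι) :
    S.anom X δv (F a) = - (∑ b, S.D a (X b) * F b) - S.D a (S.div1 X) := by
  rw [anom_apply, hV a]; abel

theorem E_skew' {E Einv : ι → ι → A} (hE : S.AntiSymp E Einv) (a b : ι) :
    E a b = sgn ((S.ε a + 1) * (S.ε b + 1) + 1) • E b a := by
  rw [hE.E_skew a b, ← neg_sgn]

theorem Einv_skew' {E Einv : ι → ι → A} (hE : S.AntiSymp E Einv) (a b : ι) :
    Einv a b = sgn (S.ε a * S.ε b + 1) • Einv b a := by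
  rw [hE.Einv_skew a b, ← neg_sgn]

/-- The inverse matrix transforms as a covariant tensor. As matrices `δ̄E = P E + E Q`, and
differentiating `E E⁻¹ = 1` gives `δ̄E⁻¹ = -E⁻¹ (δ̄E) E⁻¹ = -E⁻¹ P - Q E⁻¹`. -/
theorem anom_Einv {E Einv : ι → ι → A} (hX : S.FormVar X δv) (hE : S.AntiSymp E Einv)
    (hV : S.VarE X δv E) (b c : ι) :
    S.anom X δv (Einv b c)
      = - (∑ p, sgn (S.ε c * (S.ε p + 1)) • (Einv b p * S.D c (X p)))
        - ∑ p, S.D b (X p) * Einv p c := by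
  let M : Matrix ι ι A := Matrix.of E
  let N : Matrix ι ι A := Matrix.of Einv
  let P : Matrix ι ι A := Matrix.of fun a c => sgn (S.ε c * (S.ε a + 1)) • S.D c (X a)
  let Q : Matrix ι ι A := Matrix.of fun a c => S.D a (X c)
  let N' : Matrix ι ι A := Matrix.of fun a c => S.anom X δv (Einv a c)
  have hMN : M * N = 1 := by
    ext a c; simp [M, N, Matrix.mul_apply, hE.mul_inv, Matrix.one_apply]
  have hNM : N * M = 1 := by
    ext a c; simp [M, N, Matrix.mul_apply, hE.inv_mul, Matrix.one_apply]
  have hvar : (P * M + M * Q) * N + M * N' = 0 := by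
    ext a c
    have h := congrArg (S.anom X δv) (hE.mul_inv a c)
    have h0 : S.anom X δv (if a = c then (1 : A) else 0) = 0 := by
      split_ifs <;> simp [anom_one hX]
    rw [h0, map_sum] at h
    simp only [anom_mul hX _ (hE.E_mem a _), anom_E hV, Finset.sum_add_distrib] at h
    simpa [M, N, P, Q, N', Matrix.mul_apply, Matrix.add_apply, Finset.sum_mul, add_mul,
      Finset.sum_add_distrib] using h
  have hN' : N' = - (N * P) - Q * N := by
    have h1 : N * ((P * M + M * Q) * N + M * N') = 0 := by rw [hvar, mul_zero]
    have h2 : N * ((P * M + M * Q) * N + M * N')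
        = N * P * (M * N) + (N * M) * Q * N + (N * M) * N' := by noncomm_ring
    rw [h2, hMN, hNM, mul_one, one_mul, one_mul] at h1
    rw [eq_neg_of_add_eq_zero_right h1]; abel
  have h := congrFun (congrFun hN' b) c
  simpa [N', N, P, Q, Matrix.mul_apply, Matrix.sub_apply, Matrix.neg_apply] using h

/-- The divergence of the transport term `(X^A ∂⃖_C) V^C`: the second derivatives of `X` combine
into `∂_C div_1 X`, and the rest is the term that `anom_D` subtracts. -/
theorem div_transport (hX : S.FormVar X δv) (V : ι → A) :
    ∑ a, sgn (S.ε a) • S.D a (∑ c, sgn (S.ε c * (S.ε a + 1)) • (S.D c (X a) * V c))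
      = ∑ c, sgn (S.ε c) • (S.D c (S.div1 X) * V c)
        + ∑ c, ∑ a, sgn (S.ε c) • (S.D c (X a) * S.D a (V c)) := by
  have key : ∀ a c, sgn (S.ε a) • sgn (S.ε c * (S.ε a + 1)) • S.D a (S.D c (X a) * V c)
      = sgn (S.ε c) • (sgn (S.ε a) • S.D c (S.D a (X a)) * V c)
        + sgn (S.ε c) • (S.D c (X a) * S.D a (V c)) := by
    intro a c
    rw [S.D_leibniz a _ (S.D_mem c (hX.X_mem a)), S.D_comm a c]
    simp only [smul_add, smul_mul_assoc, sgn_smul_smul]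
    congr 1 <;> apply sgn_smul_congr <;> generalize S.ε a = x <;> generalize S.ε c = y <;>
      decide +revert
  simp only [map_sum, Finset.smul_sum, key, Finset.sum_add_distrib, div1, map_smul,
    Finset.sum_mul]
  rw [Finset.sum_comm]
  congr 1
  rw [Finset.sum_comm]

theorem lap_zero_apply (E : ι → ι → A) (g : A) :
    S.lap (fun _ => (0 : A)) E g
      = (1/2 : ℚ) • ∑ a, sgn (S.ε a) • S.D a (∑ b, E a b * S.D b g) := by
  simp [lap, L, Finset.smul_sum]

theorem div1_mem (hX : S.FormVar X δv) : S.div1 X ∈ S.hom 0 := by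
  refine Submodule.sum_mem _ fun a _ => Submodule.smul_mem _ _ ?_
  have h := S.D_mem a (hX.X_mem a)
  rwa [CharTwo.add_self_eq_zero] at h

end Basic

section Constituents

variable {ι : Type} [Fintype ι] [DecidableEq ι] {A : Type} [Ring A] [Algebra ℚ A]
variable {S : SuperAlg ι A} {X : ι → A} {δv : A →ₗ[ℚ] A} {E Einv : ι → ι → A} {F : ι → A}

/-! ### The connection-dependent term `ν_F^{(0)}` -/

theorem nuF0_eq : S.nuF0 E F = (1/4 : ℚ) • (∑ a, sgn (S.ε a) • S.D a (∑ b, E a b * F b)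
    + (1/2 : ℚ) • ∑ a, sgn (S.ε a) • (F a * ∑ b, E a b * F b)) := by
  simp only [nuF0, map_sum, Finset.smul_sum, Finset.mul_sum, smul_add, Finset.sum_add_distrib]
  simp only [smul_comm (1/2 : ℚ) (sgn _)]

theorem anom_EF (hX : S.FormVar X δv) (hE : S.AntiSymp E Einv) (hVE : S.VarE X δv E)
    (hVF : S.VarF X δv F) (a : ι) :
    S.anom X δv (∑ b, E a b * F b)
      = (∑ c, sgn (S.ε c * (S.ε a + 1)) • (S.D c (X a) * ∑ b, E c b * F b))
        - ∑ b, E a b * S.D b (S.div1 X) := by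
  have h : ∑ b, (∑ c, E a c * S.D c (X b)) * F b = ∑ b, E a b * ∑ c, S.D b (X c) * F c := by
    simp only [Finset.sum_mul, Finset.mul_sum, mul_assoc]
    rw [Finset.sum_comm]
  have h' : ∑ b, (∑ c, sgn (S.ε c * (S.ε a + 1)) • (S.D c (X a) * E c b)) * F b
      = ∑ c, sgn (S.ε c * (S.ε a + 1)) • (S.D c (X a) * ∑ b, E c b * F b) := by
    simp only [Finset.sum_mul, Finset.mul_sum, mul_assoc, smul_mul_assoc, Finset.smul_sum]
    rw [Finset.sum_comm]
  simp only [map_sum, anom_mul hX _ (hE.E_mem a _), anom_E hVE, anom_F hVF, add_mul,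
    mul_sub, mul_neg, Finset.sum_add_distrib, Finset.sum_sub_distrib, Finset.sum_neg_distrib,
    h, h']
  abel

/-- The pairing `(-1)^{ε_A} F_A E^{AB} G_B` of covectors is symmetric. -/
theorem pair_symm (hE : S.AntiSymp E Einv) {G : ι → A} (hF : ∀ a, F a ∈ S.hom (S.ε a))
    (hG : ∀ a, G a ∈ S.hom (S.ε a)) :
    ∑ a, sgn (S.ε a) • (F a * ∑ b, E a b * G b)
      = ∑ a, sgn (S.ε a) • (G a * ∑ b, E a b * F b) := by
  simp only [Finset.mul_sum, Finset.smul_sum]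
  rw [Finset.sum_comm]
  refine Finset.sum_congr rfl fun b _ => Finset.sum_congr rfl fun a _ => ?_
  rw [S.supercomm (hF a) (S.mul_mem (hE.E_mem a b) (hG b)), S.supercomm (hE.E_mem a b) (hG b),
    E_skew' hE a b]
  simp only [smul_mul_assoc, mul_smul_comm, sgn_smul_smul, mul_assoc]
  apply sgn_smul_congr
  generalize S.ε a = x
  generalize S.ε b = y
  decide +revert

/-- With `V^A = E^{AB} F_B` and `W^A = E^{AB} ∂_B div_1 X`, the vector `V` has anomaly `-W`, and
the terms linear in `F` cancel by the symmetry `pair_symm`. -/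
theorem anom_nuF0 (hX : S.FormVar X δv) (hE : S.AntiSymp E Einv)
    (hF : ∀ a, F a ∈ S.hom (S.ε a)) (hVE : S.VarE X δv E) (hVF : S.VarF X δv F) :
    S.anom X δv (S.nuF0 E F)
      = -(1/2 : ℚ) • (S.lap (fun _ => (0 : A)) E) (S.div1 X) := by
  set V : ι → A := fun a => ∑ b, E a b * F b with hV
  set W : ι → A := fun a => ∑ b, E a b * S.D b (S.div1 X) with hW
  have hTV : ∀ a, S.anom X δv (V a)
      = (∑ c, sgn (S.ε c * (S.ε a + 1)) • (S.D c (X a) * V c)) - W a :=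
    anom_EF hX hE hVE hVF
  have hG : ∀ a, S.D a (S.div1 X) ∈ S.hom (S.ε a) := fun a => by
    simpa using S.D_mem a (div1_mem hX)
  have hsym : ∑ a, sgn (S.ε a) • (F a * W a) = ∑ a, sgn (S.ε a) • (S.D a (S.div1 X) * V a) :=
    pair_symm hE hF hG
  have h1 : S.anom X δv (∑ a, sgn (S.ε a) • S.D a (V a))
      = ∑ c, sgn (S.ε c) • (S.D c (S.div1 X) * V c) - ∑ a, sgn (S.ε a) • S.D a (W a) := by
    simp only [map_sum, map_smul, anom_D hX, hTV, map_sub, smul_sub, Finset.sum_sub_distrib]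
    have := div_transport hX V
    simp only [map_sum, map_smul] at this
    rw [this]
    simp only [Finset.smul_sum]
    abel
  have hcomm : ∑ a, sgn (S.ε a) • (F a * ∑ c, sgn (S.ε c * (S.ε a + 1)) • (S.D c (X a) * V c))
      = ∑ a, sgn (S.ε a) • ((∑ b, S.D a (X b) * F b) * V a) := by
    simp only [Finset.mul_sum, Finset.sum_mul, Finset.smul_sum]
    rw [Finset.sum_comm]
    refine Finset.sum_congr rfl fun c _ => Finset.sum_congr rfl fun a _ => ?_
    rw [mul_smul_comm, ← mul_assoc, S.supercomm (hF a) (S.D_mem c (hX.X_mem a))]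
    simp only [smul_mul_assoc, sgn_smul_smul]
    apply sgn_smul_congr
    generalize S.ε a = x
    generalize S.ε c = y
    decide +revert
  have h2 : S.anom X δv (∑ a, sgn (S.ε a) • (F a * V a))
      = -(2 : ℚ) • ∑ c, sgn (S.ε c) • (S.D c (S.div1 X) * V c) := by
    simp only [map_sum, map_smul, anom_mul hX _ (hF _), hTV, anom_F hVF, mul_sub, sub_mul,
      neg_mul, smul_add, smul_sub, smul_neg, Finset.sum_add_distrib, Finset.sum_sub_distrib,
      Finset.sum_neg_distrib]
    rw [hcomm, hsym]
    module
  rw [nuF0_eq, map_smul, map_add, map_smul, h1, h2, lap_zero_apply]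
  module

/-! ### The term `ν^{(1)}` -/

/-- The anomaly `(-1)^{ε_A} (∂_C E^{AB})(∂_B ∂_A X^C)` common to `ν^{(1)}` and `ν^{(2)}`. -/
def anomJ (S : SuperAlg ι A) (X : ι → A) (E : ι → ι → A) : A :=
  ∑ a, ∑ b, ∑ c, sgn (S.ε a) • (S.D c (E a b) * S.D b (S.D a (X c)))

theorem anomJ_eq (hX : S.FormVar X δv) (hE : S.AntiSymp E Einv) :
    anomJ S X E = ∑ a, ∑ b, ∑ c, sgn (S.ε a) • (S.D b (S.D a (X c)) * S.D c (E a b)) := by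
  refine Finset.sum_congr rfl fun a _ => Finset.sum_congr rfl fun b _ =>
    Finset.sum_congr rfl fun c _ => ?_
  rw [S.supercomm (S.D_mem c (hE.E_mem a b)) (S.D_mem b (S.D_mem a (hX.X_mem c))),
    sgn_smul_smul]
  apply sgn_smul_congr
  generalize S.ε a = x
  generalize S.ε b = y
  generalize S.ε c = z
  decide +revert

/-- The variation of `E^{AB}` with its second half written as the graded transpose of the
first. -/
theorem anom_E' (hE : S.AntiSymp E Einv) (hX : S.FormVar X δv) (hVE : S.VarE X δv E) (a b : ι) :
    S.anom X δv (E a b)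
      = (∑ c, sgn (S.ε c * (S.ε a + 1)) • (S.D c (X a) * E c b))
        + sgn ((S.ε a + 1) * (S.ε b + 1) + 1) •
          ∑ c, sgn (S.ε c * (S.ε b + 1)) • (S.D c (X b) * E c a) := by
  rw [anom_E hVE, Finset.smul_sum]
  congr 1
  refine Finset.sum_congr rfl fun c _ => ?_
  rw [S.supercomm (hE.E_mem a c) (S.D_mem c (hX.X_mem b)), E_skew' hE a c]
  simp only [mul_smul_comm, sgn_smul_smul]
  apply sgn_smul_congr
  generalize S.ε a = x
  generalize S.ε b = y
  generalize S.ε c = z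
  decide +revert

theorem anom_nu1 (hX : S.FormVar X δv) (hE : S.AntiSymp E Einv) (hVE : S.VarE X δv E) :
    S.anom X δv (S.nu1 E)
      = (4 : ℚ) • (S.lap (fun _ => (0 : A)) E) (S.div1 X) + anomJ S X E := by
  -- `T` is the first half of the variation of `E`; both halves contribute `K1 + K2`.
  set T : ι → ι → A := fun a b => ∑ c, sgn (S.ε c * (S.ε a + 1)) • (S.D c (X a) * E c b) with hT
  set K1 : A := ∑ b, ∑ c, sgn (S.ε c) • S.D b (S.D c (S.div1 X) * E c b) with hK1
  set K2 : A := ∑ b, ∑ c, ∑ a, sgn (S.ε c) • S.D b (S.D c (X a) * S.D a (E c b)) with hK2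
  set K3 : A := ∑ a, ∑ b, ∑ c, sgn (S.ε a) • (S.D b (X c) * S.D c (S.D a (E a b))) with hK3
  have hA1 : ∑ a, ∑ b, sgn (S.ε a) • S.D b (S.D a (T a b)) = K1 + K2 := by
    have h : ∀ b, ∑ a, sgn (S.ε a) • S.D b (S.D a (T a b))
        = ∑ c, sgn (S.ε c) • S.D b (S.D c (S.div1 X) * E c b)
          + ∑ c, ∑ a, sgn (S.ε c) • S.D b (S.D c (X a) * S.D a (E c b)) := by
      intro b
      have := congrArg (S.D b) (div_transport hX (fun c => E c b))
      rw [map_add, map_sum] at this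
      simp only [map_smul] at this
      rw [this]
      simp only [map_sum, map_smul]
    rw [Finset.sum_comm, Finset.sum_congr rfl fun b _ => h b, Finset.sum_add_distrib]
  have hA2 : ∑ a, ∑ b, sgn (S.ε a) •
      S.D b (S.D a (sgn ((S.ε a + 1) * (S.ε b + 1) + 1) • T b a)) = K1 + K2 := by
    rw [← hA1, Finset.sum_comm]
    refine Finset.sum_congr rfl fun b _ => Finset.sum_congr rfl fun a _ => ?_
    rw [S.D_comm b a]
    simp only [map_smul, sgn_smul_smul]
    apply sgn_smul_congr
    generalize S.ε a = x
    generalize S.ε b = y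
    decide +revert
  have hexp : S.anom X δv (S.nu1 E) = (K1 + K2) + (K1 + K2) - K2 - K3 := by
    have h2 : K2 = ∑ a, ∑ b, ∑ c, sgn (S.ε a) • S.D b (S.D a (X c) * S.D c (E a b)) := by
      rw [hK2, Finset.sum_comm]
    rw [← hA2]
    nth_rewrite 1 [hA2]
    rw [← hA1, hK3, h2]
    simp only [nu1, map_sum, map_smul, anom_D hX, anom_E' hE hX hVE, map_add, map_sub, smul_add,
      smul_sub, Finset.sum_add_distrib, Finset.sum_sub_distrib, Finset.smul_sum, hT]
  have hK23 : K2 = anomJ S X E + K3 := by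
    rw [anomJ_eq hX hE, hK2, hK3, Finset.sum_comm]
    have hK3' : ∑ a, ∑ b, ∑ c, sgn (S.ε a) • (S.D b (X c) * S.D c (S.D a (E a b)))
        = ∑ a, ∑ b, ∑ c, sgn (S.ε b) • (S.D a (X c) * S.D c (S.D b (E b a))) := by
      rw [Finset.sum_comm]
    rw [hK3']
    simp only [← Finset.sum_add_distrib]
    refine Finset.sum_congr rfl fun a _ => Finset.sum_congr rfl fun b _ =>
      Finset.sum_congr rfl fun c _ => ?_
    rw [S.D_leibniz b _ (S.D_mem a (hX.X_mem c)), smul_add, S.D_comm c b, E_skew' hE b a]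
    simp only [map_smul, mul_smul_comm, sgn_smul_smul]
    congr 1
    apply sgn_smul_congr
    generalize S.ε a = x
    generalize S.ε b = y
    generalize S.ε c = z
    decide +revert
  have hK1' : K1 = (2 : ℚ) • S.lap (fun _ => (0 : A)) E (S.div1 X) := by
    have h : K1 = ∑ b, sgn (S.ε b) • S.D b (∑ c, E b c * S.D c (S.div1 X)) := by
      simp only [hK1, map_sum, Finset.smul_sum]
      refine Finset.sum_congr rfl fun b _ => Finset.sum_congr rfl fun c _ => ?_
      rw [S.supercomm (S.D_mem c (div1_mem hX)) (hE.E_mem c b), E_skew' hE c b]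
      simp only [smul_mul_assoc, map_smul, sgn_smul_smul]
      apply sgn_smul_congr
      generalize S.ε c = x
      generalize S.ε b = y
      decide +revert
    rw [lap_zero_apply, h]
    module
  rw [hexp, hK23, hK1']
  module

/-- The Jacobi identity for the components `E^{AB}`, obtained by evaluating the bracket Jacobi
identity on coordinate functions. -/
theorem jacobi_components (hJac : S.JacobiId E) (a b c : ι) :
    sgn ((S.ε a + 1) * (S.ε c + 1)) • (∑ d, E a d * S.D d (E b c))
      + sgn ((S.ε b + 1) * (S.ε a + 1)) • (∑ d, E b d * S.D d (E c a))
      + sgn ((S.ε c + 1) * (S.ε b + 1)) • (∑ d, E c d * S.D d (E a b)) = 0 := by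
  have hb : ∀ a g, S.brkt E (S.ε a) (S.coord a) g = ∑ d, E a d * S.D d g := by
    intro a g
    have hs : sgn (S.ε a * (S.ε a + 1)) = 1 := by
      rw [← sgn_zero_eq]
      congr 1
      generalize S.ε a = x
      decide +revert
    unfold brkt
    rw [Finset.sum_eq_single a]
    · simp [S.D_coord, hs]
    · intro e _ he
      simp [S.D_coord, he]
    · simp
  have hbb : ∀ a b, S.brkt E (S.ε a) (S.coord a) (S.coord b) = E a b := by
    intro a b
    simp [hb, S.D_coord]
  have h := hJac _ _ _ _ _ _ (S.coord_mem a) (S.coord_mem b) (S.coord_mem c)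
  simpa only [hbb, hb] using h

theorem mul_swap_left {p q : ZMod 2} {x y : A} (hx : x ∈ S.hom p) (hy : y ∈ S.hom q) (w : A) :
    x * (y * w) = sgn (p * q) • (y * (x * w)) := by
  rw [← mul_assoc, S.supercomm hx hy, smul_mul_assoc, mul_assoc]

theorem anom_DE (hX : S.FormVar X δv) (hE : S.AntiSymp E Einv) (hVE : S.VarE X δv E)
    (d a b : ι) :
    S.anom X δv (S.D d (E a b)) =
      (∑ p, sgn (S.ε p * (S.ε a + 1)) • (S.D d (S.D p (X a)) * E p b))
      + (∑ p, sgn (S.ε p * (S.ε a + 1) + S.ε d * (S.ε a + S.ε p)) •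
          (S.D p (X a) * S.D d (E p b)))
      + (∑ p, S.D d (E a p) * S.D p (X b))
      + (∑ p, sgn (S.ε d * (S.ε a + S.ε p + 1)) • (E a p * S.D d (S.D p (X b))))
      - ∑ p, S.D d (X p) * S.D p (E a b) := by
  rw [anom_D hX, anom_E hVE]
  simp only [map_add, map_sum, map_smul, S.D_leibniz d _ (S.D_mem _ (hX.X_mem a)),
    S.D_leibniz d _ (hE.E_mem a _), smul_add, sgn_smul_smul, Finset.sum_add_distrib]
  abel

/-! ### The term `ν^{(2)}` -/

section NuTwo

variable (S X E Einv)

/-- The first derivatives `∂_D E^{AB}`. -/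
def dE (d a b : ι) : A := S.D d (E a b)

/-- The second derivatives `∂_D ∂_P X^A`. -/
def ddX (d p a : ι) : A := S.D d (S.D p (X a))

/-- The combination `E^{PA} ∂_A E^{CD}` entering the Jacobi identity. -/
def EdE (p c d : ι) : A := ∑ a, E p a * S.D a (E c d)

variable {S X E Einv}

theorem dE_mem (hE : S.AntiSymp E Einv) (d a b : ι) :
    dE S E d a b ∈ S.hom (S.ε a + S.ε b + 1 + S.ε d) := S.D_mem d (hE.E_mem a b)

theorem dE_skew (hE : S.AntiSymp E Einv) (d a b : ι) :
    dE S E d a b = sgn ((S.ε a + 1) * (S.ε b + 1) + 1) • dE S E d b a := by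
  rw [dE, E_skew' hE a b, map_smul, dE]

theorem ddX_mem (hX : S.FormVar X δv) (d p a : ι) :
    ddX S X d p a ∈ S.hom (S.ε a + S.ε p + S.ε d) := S.D_mem d (S.D_mem p (hX.X_mem a))

theorem ddX_symm (d p a : ι) : ddX S X d p a = sgn (S.ε d * S.ε p) • ddX S X p d a :=
  S.D_comm d p (X a)

/-- The expansion of one summand of `δ̄ν^{(2)}`: four terms with second derivatives of `X`
and eight terms with first derivatives. -/
theorem anom_nu2_term (hX : S.FormVar X δv) (hE : S.AntiSymp E Einv) (hVE : S.VarE X δv E)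
    (a b c d : ι) :
    S.anom X δv (dE S E d a b * (Einv b c * dE S E a c d)) =
      (∑ p, sgn (S.ε p * (S.ε a + 1)) •
        (ddX S X d p a * (E p b * (Einv b c * dE S E a c d))))
      + (∑ p, sgn (S.ε d * (S.ε a + S.ε p + 1)) •
        (E a p * (ddX S X d p b * (Einv b c * dE S E a c d))))
      + (∑ p, sgn (S.ε p * (S.ε c + 1)) •
        (dE S E d a b * (Einv b c * (ddX S X a p c * E p d))))
      + (∑ p, sgn (S.ε a * (S.ε c + S.ε p + 1)) •
        (dE S E d a b * (Einv b c * (E c p * ddX S X a p d))))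
      + ((∑ p, sgn (S.ε p * (S.ε a + 1) + S.ε d * (S.ε a + S.ε p)) •
        (S.D p (X a) * (dE S E d p b * (Einv b c * dE S E a c d))))
      - (∑ p, dE S E d a b * (Einv b c * (S.D a (X p) * dE S E p c d))))
      + ((∑ p, dE S E d a p * (S.D p (X b) * (Einv b c * dE S E a c d)))
      - (∑ p, dE S E d a b * (S.D b (X p) * (Einv p c * dE S E a c d))))
      + ((∑ p, dE S E d a b * (Einv b c * (dE S E a c p * S.D p (X d))))
      - (∑ p, S.D d (X p) * (dE S E p a b * (Einv b c * dE S E a c d))))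
      + ((∑ p, sgn (S.ε p * (S.ε c + 1) + S.ε a * (S.ε c + S.ε p)) •
        (dE S E d a b * (Einv b c * (S.D p (X c) * dE S E a p d))))
      - (∑ p, sgn (S.ε c * (S.ε p + 1)) •
        (dE S E d a b * (Einv b p * (S.D c (X p) * dE S E a c d))))) := by
  rw [anom_mul hX _ (dE_mem hE d a b), anom_mul hX _ (hE.Einv_mem b c), anom_Einv hX hE hVE]
  simp only [dE, ddX, anom_DE hX hE hVE, mul_add, add_mul, mul_sub, sub_mul, neg_mul, mul_neg,
    Finset.sum_mul, Finset.mul_sum, mul_smul_comm, smul_mul_assoc, mul_assoc]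
  abel

/-! The four lemmas `nu2_H1`, …, `nu2_H4` pair off the eight terms with first derivatives of `X`
after relabelling indices; `nu2_I1`, …, `nu2_I4` treat the terms with second derivatives. -/

theorem nu2_H1 (hX : S.FormVar X δv) (hE : S.AntiSymp E Einv) :
    ∑ a, ∑ b, ∑ c, ∑ d, ∑ p, sgn (S.ε a * S.ε c) •
        sgn (S.ε p * (S.ε a + 1) + S.ε d * (S.ε a + S.ε p)) •
        (S.D p (X a) * (dE S E d p b * (Einv b c * dE S E a c d)))
      = ∑ a, ∑ b, ∑ c, ∑ d, ∑ p, sgn (S.ε a * S.ε c) •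
        (dE S E d a b * (Einv b c * (S.D a (X p) * dE S E p c d))) := by
  refine sum5_reindex _ _ (fun (a, b, c, d, p) => (p, b, c, d, a))
    (fun (a, b, c, d, p) => (p, b, c, d, a)) (fun _ => rfl) (fun _ => rfl) ?_
  intro a b c d p
  dsimp only
  rw [mul_swap_left (S.D_mem p (hX.X_mem a)) (dE_mem hE d p b),
    mul_swap_left (S.D_mem p (hX.X_mem a)) (hE.Einv_mem b c)]
  simp only [mul_smul_comm, sgn_smul_smul]
  apply sgn_smul_congr
  generalize S.ε a = x, S.ε b = y, S.ε c = z, S.ε d = u, S.ε p = v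
  decide +revert

theorem nu2_H2 :
    ∑ a, ∑ b, ∑ c, ∑ d, ∑ p, sgn (S.ε a * S.ε c) •
        (dE S E d a p * (S.D p (X b) * (Einv b c * dE S E a c d)))
      = ∑ a, ∑ b, ∑ c, ∑ d, ∑ p, sgn (S.ε a * S.ε c) •
        (dE S E d a b * (S.D b (X p) * (Einv p c * dE S E a c d))) :=
  sum5_reindex _ _ (fun (a, b, c, d, p) => (a, p, c, d, b))
    (fun (a, b, c, d, p) => (a, p, c, d, b)) (fun _ => rfl) (fun _ => rfl)
    fun _ _ _ _ _ => rfl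

theorem nu2_H3 (hX : S.FormVar X δv) (hE : S.AntiSymp E Einv) :
    ∑ a, ∑ b, ∑ c, ∑ d, ∑ p, sgn (S.ε a * S.ε c) •
        (dE S E d a b * (Einv b c * (dE S E a c p * S.D p (X d))))
      = ∑ a, ∑ b, ∑ c, ∑ d, ∑ p, sgn (S.ε a * S.ε c) •
        (S.D d (X p) * (dE S E p a b * (Einv b c * dE S E a c d))) := by
  refine sum5_reindex _ _ (fun (a, b, c, d, p) => (a, b, c, p, d))
    (fun (a, b, c, d, p) => (a, b, c, p, d)) (fun _ => rfl) (fun _ => rfl) ?_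
  intro a b c d p
  dsimp only
  rw [mul_swap_left (S.D_mem p (hX.X_mem d)) (dE_mem hE d a b),
    mul_swap_left (S.D_mem p (hX.X_mem d)) (hE.Einv_mem b c),
    S.supercomm (S.D_mem p (hX.X_mem d)) (dE_mem hE a c p)]
  simp only [mul_smul_comm, sgn_smul_smul]
  apply sgn_smul_congr
  generalize S.ε a = x, S.ε b = y, S.ε c = z, S.ε d = u, S.ε p = v
  decide +revert

theorem nu2_H4 :
    ∑ a, ∑ b, ∑ c, ∑ d, ∑ p, sgn (S.ε a * S.ε c) •
        sgn (S.ε p * (S.ε c + 1) + S.ε a * (S.ε c + S.ε p)) •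
        (dE S E d a b * (Einv b c * (S.D p (X c) * dE S E a p d)))
      = ∑ a, ∑ b, ∑ c, ∑ d, ∑ p, sgn (S.ε a * S.ε c) • sgn (S.ε c * (S.ε p + 1)) •
        (dE S E d a b * (Einv b p * (S.D c (X p) * dE S E a c d))) := by
  refine sum5_reindex _ _ (fun (a, b, c, d, p) => (a, b, p, d, c))
    (fun (a, b, c, d, p) => (a, b, p, d, c)) (fun _ => rfl) (fun _ => rfl) ?_
  intro a b c d p
  dsimp only
  simp only [sgn_smul_smul]
  apply sgn_smul_congr
  generalize S.ε a = x, S.ε c = z, S.ε p = v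
  decide +revert

theorem nu2_I1 (hX : S.FormVar X δv) (hE : S.AntiSymp E Einv) :
    ∑ a, ∑ b, ∑ c, ∑ d, ∑ p, sgn (S.ε a * S.ε c) • sgn (S.ε p * (S.ε a + 1)) •
        (ddX S X d p a * (E p b * (Einv b c * dE S E a c d))) = anomJ S X E := by
  have h := sum5_reindex (fun a b c d p => sgn (S.ε a * S.ε c) • sgn (S.ε p * (S.ε a + 1)) •
        (ddX S X d p a * (E p b * (Einv b c * dE S E a c d))))
    (fun c d a p b => sgn (S.ε a * S.ε c) • sgn (S.ε p * (S.ε a + 1)) •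
        (ddX S X d p a * (E p b * (Einv b c * dE S E a c d))))
    (fun (a, b, c, d, p) => (c, d, a, p, b)) (fun (c, d, a, p, b) => (a, b, c, d, p))
    (fun _ => rfl) (fun _ => rfl) (fun _ _ _ _ _ => rfl)
  rw [h, anomJ_eq hX hE]
  refine Finset.sum_congr rfl fun c _ => Finset.sum_congr rfl fun d _ =>
    Finset.sum_congr rfl fun a _ => ?_
  simp only [← Finset.smul_sum, ← Finset.mul_sum, ← mul_assoc (E _ _), ← Finset.sum_mul,
    hE.mul_inv]
  simp only [ite_mul, one_mul, zero_mul, mul_ite, mul_zero, smul_ite, smul_zero,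
    Finset.sum_ite_eq', Finset.mem_univ, if_true, sgn_smul_smul, ddX, dE]
  apply sgn_smul_congr
  generalize S.ε a = x, S.ε c = z
  decide +revert

theorem nu2_I4 (hE : S.AntiSymp E Einv) :
    ∑ a, ∑ b, ∑ c, ∑ d, ∑ p, sgn (S.ε a * S.ε c) • sgn (S.ε a * (S.ε c + S.ε p + 1)) •
        (dE S E d a b * (Einv b c * (E c p * ddX S X a p d))) = anomJ S X E := by
  have h := sum5_reindex (fun a b c d p => sgn (S.ε a * S.ε c) •
        sgn (S.ε a * (S.ε c + S.ε p + 1)) •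
        (dE S E d a b * (Einv b c * (E c p * ddX S X a p d))))
    (fun a b d p c => sgn (S.ε a * (S.ε p + 1)) •
        (dE S E d a b * (Einv b c * (E c p * ddX S X a p d))))
    (fun (a, b, c, d, p) => (a, b, d, p, c)) (fun (a, b, d, p, c) => (a, b, c, d, p))
    (fun _ => rfl) (fun _ => rfl) (by
      intro a b c d p
      dsimp only
      simp only [sgn_smul_smul]
      apply sgn_smul_congr
      generalize S.ε a = x, S.ε c = z, S.ε p = v
      decide +revert)
  rw [h]
  refine Finset.sum_congr rfl fun a _ => Finset.sum_congr rfl fun b _ =>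
    Finset.sum_congr rfl fun d _ => ?_
  simp only [← Finset.smul_sum, ← Finset.mul_sum, ← mul_assoc (Einv _ _), ← Finset.sum_mul,
    hE.inv_mul]
  simp only [ite_mul, one_mul, zero_mul, mul_ite, mul_zero, smul_ite, smul_zero,
    Finset.sum_ite_eq, Finset.mem_univ, if_true]
  rw [ddX_symm a b d]
  simp only [mul_smul_comm, sgn_smul_smul, ddX, dE]
  apply sgn_smul_congr
  generalize S.ε a = x, S.ε b = z
  decide +revert

/-- The common value of the two terms of `δ̄ν^{(2)}` which need the Jacobi identity. -/
def jacTerm (S : SuperAlg ι A) (X : ι → A) (E Einv : ι → ι → A) : A :=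
  ∑ d, ∑ p, ∑ b, ∑ c, sgn (S.ε c * (S.ε p + 1) + 1) •
    (ddX S X d p b * (Einv b c * EdE S E p c d))

theorem jacTerm_eq : jacTerm S X E Einv = ∑ d, ∑ p, ∑ b, ∑ c, ∑ a,
    sgn (S.ε c * (S.ε p + 1) + 1) •
      (ddX S X d p b * (Einv b c * (E p a * dE S E a c d))) := by
  simp only [jacTerm, EdE, dE, Finset.mul_sum, Finset.smul_sum]

theorem nu2_I2 (hX : S.FormVar X δv) (hE : S.AntiSymp E Einv) :
    ∑ a, ∑ b, ∑ c, ∑ d, ∑ p, sgn (S.ε a * S.ε c) • sgn (S.ε d * (S.ε a + S.ε p + 1)) •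
        (E a p * (ddX S X d p b * (Einv b c * dE S E a c d))) = jacTerm S X E Einv := by
  rw [jacTerm_eq]
  refine sum5_reindex _ _ (fun (a, b, c, d, p) => (d, p, b, c, a))
    (fun (d, p, b, c, a) => (a, b, c, d, p)) (fun _ => rfl) (fun _ => rfl) ?_
  intro a b c d p
  dsimp only
  rw [mul_swap_left (hE.E_mem a p) (ddX_mem hX d p b),
    mul_swap_left (hE.E_mem a p) (hE.Einv_mem b c), E_skew' hE a p]
  simp only [smul_mul_assoc, mul_smul_comm, sgn_smul_smul]
  apply sgn_smul_congr
  generalize S.ε a = x, S.ε b = y, S.ε c = z, S.ε d = u, S.ε p = v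
  decide +revert

theorem nu2_I3 (hX : S.FormVar X δv) (hE : S.AntiSymp E Einv) :
    ∑ a, ∑ b, ∑ c, ∑ d, ∑ p, sgn (S.ε a * S.ε c) • sgn (S.ε p * (S.ε c + 1)) •
        (dE S E d a b * (Einv b c * (ddX S X a p c * E p d))) = jacTerm S X E Einv := by
  rw [jacTerm_eq]
  refine sum5_reindex _ _ (fun (a, b, c, d, p) => (a, p, c, b, d))
    (fun (a, p, c, b, d) => (a, b, c, d, p)) (fun _ => rfl) (fun _ => rfl) ?_
  intro a b c d p
  dsimp only
  rw [mul_swap_left (hE.Einv_mem b c) (ddX_mem hX a p c), mul_smul_comm,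
    mul_swap_left (dE_mem hE d a b) (ddX_mem hX a p c),
    mul_swap_left (dE_mem hE d a b) (hE.Einv_mem b c),
    S.supercomm (dE_mem hE d a b) (hE.E_mem p d), Einv_skew' hE b c, dE_skew hE d a b]
  simp only [smul_mul_assoc, mul_smul_comm, sgn_smul_smul]
  apply sgn_smul_congr
  generalize S.ε a = x, S.ε b = y, S.ε c = z, S.ε d = u, S.ε p = v
  decide +revert

/-- Symmetrising `jacTerm` in the two derivative indices of `∂_D ∂_P X^B` and using the Jacobi
identity leaves a term in which `E⁻¹` contracts with `E`. -/
theorem jacTerm_add (hX : S.FormVar X δv) (hE : S.AntiSymp E Einv) (hJac : S.JacobiId E) :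
    jacTerm S X E Einv + jacTerm S X E Einv = anomJ S X E := by
  have hswap : jacTerm S X E Einv = ∑ d, ∑ p, ∑ b, ∑ c,
      sgn (S.ε c * (S.ε d + 1) + 1 + S.ε d * S.ε p + (S.ε c + 1) * (S.ε p + 1) + 1) •
        (ddX S X d p b * (Einv b c * EdE S E d p c)) := by
    rw [jacTerm, Finset.sum_comm]
    refine Finset.sum_congr rfl fun d _ => Finset.sum_congr rfl fun p _ =>
      Finset.sum_congr rfl fun b _ => Finset.sum_congr rfl fun c _ => ?_
    have hZ : EdE S E d c p = sgn ((S.ε c + 1) * (S.ε p + 1) + 1) • EdE S E d p c := by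
      simp only [EdE, Finset.smul_sum]
      refine Finset.sum_congr rfl fun a _ => ?_
      rw [E_skew' hE c p, map_smul, mul_smul_comm]
    rw [ddX_symm p d b, hZ]
    simp only [smul_mul_assoc, mul_smul_comm, sgn_smul_smul]
    apply sgn_smul_congr
    generalize S.ε c = z, S.ε d = u, S.ε p = v
    decide +revert
  -- The Jacobi identity for the indices `p, c, d`, solved for its cyclic term `E^{CA} ∂_A E^{DP}`.
  have hJ : ∀ p c d, sgn (S.ε c * (S.ε p + 1) + 1) • EdE S E p c d
      + sgn (S.ε c * (S.ε d + 1) + 1 + S.ε d * S.ε p + (S.ε c + 1) * (S.ε p + 1) + 1) •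
        EdE S E d p c = sgn (S.ε p * S.ε d + S.ε d) • EdE S E c d p := by
    intro p c d
    have h := congrArg (fun x => sgn (S.ε c * (S.ε p + 1) + (S.ε p + 1) * (S.ε d + 1) + 1) • x)
      (jacobi_components hJac p c d)
    simp only [smul_zero, smul_add, sgn_smul_smul] at h
    change _ • EdE S E p c d + _ • EdE S E c d p + _ • EdE S E d p c = 0 at h
    have e1 : S.ε c * (S.ε p + 1) + (S.ε p + 1) * (S.ε d + 1) + 1 + (S.ε p + 1) * (S.ε d + 1)
        = S.ε c * (S.ε p + 1) + 1 := by
      generalize S.ε c = z, S.ε d = u, S.ε p = v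
      decide +revert
    have e2 : S.ε c * (S.ε p + 1) + (S.ε p + 1) * (S.ε d + 1) + 1 + (S.ε c + 1) * (S.ε p + 1)
        = S.ε p * S.ε d + S.ε d + 1 := by
      generalize S.ε c = z, S.ε d = u, S.ε p = v
      decide +revert
    have e3 : S.ε c * (S.ε p + 1) + (S.ε p + 1) * (S.ε d + 1) + 1 + (S.ε d + 1) * (S.ε c + 1)
        = S.ε c * (S.ε d + 1) + 1 + S.ε d * S.ε p + (S.ε c + 1) * (S.ε p + 1) + 1 := by
      generalize S.ε c = z, S.ε d = u, S.ε p = v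
      decide +revert
    rw [e1, e2, e3, ← neg_sgn (S.ε p * S.ε d + S.ε d), neg_smul] at h
    rw [← sub_eq_zero, ← h]
    abel
  nth_rewrite 2 [hswap]
  rw [jacTerm, anomJ_eq hX hE]
  simp only [← Finset.sum_add_distrib, ← mul_smul_comm, ← mul_add, hJ]
  refine Finset.sum_congr rfl fun d _ => Finset.sum_congr rfl fun p _ =>
    Finset.sum_congr rfl fun b _ => ?_
  have hcontr : ∑ c, Einv b c * EdE S E c d p = S.D b (E d p) := by
    simp only [EdE, Finset.mul_sum, ← mul_assoc]
    rw [Finset.sum_comm]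
    simp only [← Finset.sum_mul, hE.inv_mul, ite_mul, one_mul, zero_mul, Finset.sum_ite_eq,
      Finset.mem_univ, if_true]
  simp only [mul_smul_comm, ← Finset.smul_sum, ← Finset.mul_sum, hcontr]
  rw [ddX_symm d p b, smul_mul_assoc, sgn_smul_smul, ddX]
  apply sgn_smul_congr
  generalize S.ε d = u, S.ε p = v
  decide +revert

theorem anom_nu2 (hX : S.FormVar X δv) (hE : S.AntiSymp E Einv) (hVE : S.VarE X δv E)
    (hJac : S.JacobiId E) :
    S.anom X δv (S.nu2 E Einv) = (3 : ℚ) • anomJ S X E := by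
  have h : S.nu2 E Einv = ∑ a, ∑ b, ∑ c, ∑ d, sgn (S.ε a * S.ε c) •
      (dE S E d a b * (Einv b c * dE S E a c d)) := rfl
  rw [h]
  simp only [map_sum, map_smul, anom_nu2_term hX hE hVE, smul_add, smul_sub,
    Finset.sum_add_distrib, Finset.sum_sub_distrib, Finset.smul_sum]
  rw [nu2_I1 hX hE, nu2_I2 hX hE, nu2_I3 hX hE, nu2_I4 hE, nu2_H1 hX hE, nu2_H2,
    nu2_H3 hX hE, nu2_H4]
  have h3 : (3 : ℚ) • anomJ S X E = anomJ S X E + anomJ S X E + anomJ S X E := by module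
  nth_rewrite 2 [← jacTerm_add hX hE hJac] at h3
  rw [h3]
  abel

end NuTwo

end Constituents

end SuperAlg

namespace SuperAlg

/-- Proposition 2: `ν_F` is a scalar under general coordinate
transformations: under an arbitrary infinitesimal coordinate transformation
`δΓ^A = X^A` (encoded by a form variation `δv`), the anomalous variations
`δ̄Q = δv Q + X^C ∂_C Q` of the three constituents are
`δ̄ν_F^{(0)} = -(1/2)Δ_1 div_1 X`,
`δ̄ν^{(1)} = 4Δ_1 div_1 X + (-1)^{ε_A}(∂_C E^{AB})(∂_B ∂_A X^C)`,
`δ̄ν^{(2)} = 3(-1)^{ε_A}(∂_C E^{AB})(∂_B ∂_A X^C)`, so that `δ̄ν_F = 0`. -/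
theorem nuF_is_scalar
    {ι : Type} [Fintype ι] [DecidableEq ι] {A : Type} [Ring A] [Algebra ℚ A]
    (S : SuperAlg ι A) (E Einv : ι → ι → A) (F : ι → A)
    (hE : S.AntiSymp E Einv) (hF : ∀ a, F a ∈ S.hom (S.ε a))
    (hJac : S.JacobiId E) :
    ∀ (X : ι → A) (δv : A →ₗ[ℚ] A), S.FormVar X δv → S.VarE X δv E →
      S.VarF X δv F →
      (∀ a c, ∑ b, (δv (E a b) * Einv b c + E a b * δv (Einv b c)) = 0) →
      (δv (S.nuF0 E F) + ∑ c, X c * S.D c (S.nuF0 E F)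
          = -(1/2 : ℚ) • (S.lap (fun _ => (0 : A)) E) (S.div1 X))
      ∧ (δv (S.nu1 E) + ∑ c, X c * S.D c (S.nu1 E)
          = (4 : ℚ) • (S.lap (fun _ => (0 : A)) E) (S.div1 X)
            + ∑ a, ∑ b, ∑ c, sgn (S.ε a) • (S.D c (E a b) * S.D b (S.D a (X c))))
      ∧ (δv (S.nu2 E Einv) + ∑ c, X c * S.D c (S.nu2 E Einv)
          = (3 : ℚ) • ∑ a, ∑ b, ∑ c,
              sgn (S.ε a) • (S.D c (E a b) * S.D b (S.D a (X c))))
      ∧ (δv (S.nuF E Einv F) + ∑ c, X c * S.D c (S.nuF E Einv F) = 0) := by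
  intro X δv hX hVE hVF _
  have h0 := anom_nuF0 hX hE hF hVE hVF
  have h1 := anom_nu1 hX hE hVE
  have h2 := anom_nu2 hX hE hVE hJac
  have h3 : S.anom X δv (S.nuF E Einv F) = 0 := by
    rw [nuF, map_sub, map_add, map_smul, map_smul, h0, h1, h2]
    module
  rw [anom_apply] at h0 h1 h2 h3
  exact ⟨h0, h1, h2, h3⟩

end SuperAlg
end
end

section
/- When the torsion tensor and the Ricci two-form R_{AB}^{form} = R_{AB}{}^C{}_C (-1)^{ε_C} of a connection ∇ vanish, the Ricci tensor R_{AB} = R^C{}_{CAB} possesses the same graded symmetry as the antisymplectic metric with upper indices: R_{AB} = -(-1)^{(ε_A+1)(ε_B+1)} R_{BA}. -/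
/-!
The curvature is the graded antisymmetrisation `R_{AB}{}^C{}_D = X_A{}^C{}_{BD} - (-1)^{ε_A ε_B} (A ↔ B)`
of `X_A{}^C{}_{BD} = (∂_A Γ_B{}^C{}_D) + (-1)^{ε_B ε_C} Γ_A{}^C{}_E Γ^E{}_{BD}`.
Vanishing torsion makes `X` graded symmetric in `B` and `D` (`halfRiem_symm`), which is the
content of the first Bianchi identity. In `R_{AB}` the terms `X_C{}^C{}_{AB}` therefore have the
claimed symmetry, while the terms `X_A{}^C{}_{CB}` become `X_A{}^C{}_{BC}`, whose graded
antisymmetrisation in `A`, `B` is the Ricci two-form. The contracted Bianchi identity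
`ricci_summand` records this summand by summand, and the theorem is its sum over `C`.
-/

open scoped BigOperators

noncomputable section

namespace SuperAlg

/-- The half of the Riemann tensor whose graded antisymmetrisation in `a`, `b` is the curvature:
`X_A{}^C{}_{BD} = (∂_A Γ_B{}^C{}_D) + (-1)^{ε_B ε_C} Γ_A{}^C{}_E Γ^E{}_{BD}`,
with arguments in the order `a b c d` of `riem`. -/
def halfRiem {ι : Type} [Fintype ι] [DecidableEq ι] {A : Type} [Ring A] [Algebra ℚ A]
    (S : SuperAlg ι A) (Gm : ι → ι → ι → A) (a b c d : ι) : A :=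
  S.D a (Gm b c d) + sgn (S.ε b * S.ε c) • (∑ e, Gm a c e * S.Gup Gm e b d)

theorem riem_eq_halfRiem {ι : Type} [Fintype ι] [DecidableEq ι] {A : Type} [Ring A] [Algebra ℚ A]
    (S : SuperAlg ι A) (Gm : ι → ι → ι → A) (a b c d : ι) :
    S.riem Gm a b c d
      = halfRiem S Gm a b c d - sgn (S.ε a * S.ε b) • halfRiem S Gm b a c d := rfl

theorem sgn_mul_self (p : ZMod 2) : sgn p * sgn p = 1 := by
  unfold sgn; split_ifs <;> norm_num

theorem sgn_add (p q : ZMod 2) : sgn (p + q) = sgn p * sgn q := by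
  have h : ∀ p q : ZMod 2, (p + q = 0 ↔ (p = 0 ↔ q = 0)) := by decide
  unfold sgn
  by_cases hp : p = 0 <;> by_cases hq : q = 0 <;> simp [h, hp, hq]

theorem neg_sgn_succ_mul_succ (p q : ZMod 2) :
    - sgn ((p + 1) * (q + 1)) = sgn (p * q) * sgn p * sgn q := by
  have h : (p + 1) * (q + 1) = p * q + p + q + 1 := by ring
  have h1 : sgn 1 = -1 := if_neg (by decide)
  rw [h, sgn_add, sgn_add, sgn_add, h1]
  ring

/-- For a torsion-free connection, `halfRiem` is graded symmetric in its indices `b`, `d`. -/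
theorem halfRiem_symm {ι : Type} [Fintype ι] [DecidableEq ι] {A : Type} [Ring A] [Algebra ℚ A]
    (S : SuperAlg ι A) (Gm : ι → ι → ι → A)
    (htf : ∀ a b c,
      S.Gup Gm a b c = - sgn ((S.ε b + 1) * (S.ε c + 1)) • S.Gup Gm a c b)
    (a b c d : ι) :
    halfRiem S Gm a b c d
      = (sgn (S.ε b * S.ε d) * sgn (S.ε b) * sgn (S.ε d)
          * sgn (S.ε c * S.ε b) * sgn (S.ε c * S.ε d)) • halfRiem S Gm a d c b := by
  have hG : ∀ x y z, Gm x y z = sgn (S.ε y * S.ε x) • S.Gup Gm y x z := fun x y z => by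
    rw [Gup, smul_smul, sgn_mul_self, one_smul]
  have hsym : ∀ e, S.Gup Gm e b d
      = (sgn (S.ε b * S.ε d) * sgn (S.ε b) * sgn (S.ε d)) • S.Gup Gm e d b := fun e => by
    rw [htf, neg_sgn_succ_mul_succ]
  have hcd := sgn_mul_self (S.ε c * S.ε d)
  unfold halfRiem
  rw [hG b c d, hG d c b, mul_comm (S.ε b) (S.ε c), mul_comm (S.ε d) (S.ε c)]
  simp only [hsym, map_smul, mul_smul_comm, ← Finset.smul_sum, smul_add, smul_smul]
  congr 2 <;> linear_combination
    (-(sgn (S.ε b * S.ε d) * sgn (S.ε b) * sgn (S.ε d) * sgn (S.ε c * S.ε b))) * hcd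

/-- Contracted Bianchi identity before summation over `c`: the failure of the Ricci summand to
have the claimed symmetry is, up to sign, the summand of the Ricci two-form. -/
theorem ricci_summand {ι : Type} [Fintype ι] [DecidableEq ι] {A : Type} [Ring A] [Algebra ℚ A]
    (S : SuperAlg ι A) (Gm : ι → ι → ι → A)
    (htf : ∀ a b c,
      S.Gup Gm a b c = - sgn ((S.ε b + 1) * (S.ε c + 1)) • S.Gup Gm a c b)
    (a b c : ι) :
    sgn (S.ε c * (S.ε a + S.ε c)) • S.riem Gm c a c b
      = - sgn ((S.ε a + 1) * (S.ε b + 1)) •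
          (sgn (S.ε c * (S.ε b + S.ε c)) • S.riem Gm c b c a)
        - sgn (S.ε b) • (sgn (S.ε c) • S.riem Gm a b c c) := by
  simp only [riem_eq_halfRiem]
  rw [halfRiem_symm S Gm htf c a c b, halfRiem_symm S Gm htf a c c b,
    halfRiem_symm S Gm htf b c c a]
  generalize halfRiem S Gm c b c a = x
  generalize halfRiem S Gm a b c c = y
  generalize halfRiem S Gm b a c c = z
  generalize S.ε a = p
  generalize S.ε b = q
  generalize S.ε c = r
  have h01 : ∀ s : ZMod 2, s = 0 ∨ s = 1 := by decide
  have h11 : (1 : ZMod 2) + 1 = 0 := by decide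
  -- What remains is linear in `x`, `y`, `z`, with signs to compare for each choice of parities.
  rcases h01 p with rfl | rfl <;> rcases h01 q with rfl | rfl <;>
    rcases h01 r with rfl | rfl <;> simp [sgn, h11] <;> module

/-- When the torsion tensor and the Ricci two-form
`R_{AB}{}^C{}_C (-1)^{ε_C}` vanish, the Ricci tensor `R_{AB} = R^C{}_{CAB}` has the
symmetry `R_{AB} = -(-1)^{(ε_A+1)(ε_B+1)} R_{BA}`. -/
theorem ricci_tensor_symmetry
    {ι : Type} [Fintype ι] [DecidableEq ι] {A : Type} [Ring A] [Algebra ℚ A]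
    (S : SuperAlg ι A) (Gm : ι → ι → ι → A)
    (hGm_mem : ∀ a b c, Gm a b c ∈ S.hom (S.ε a + S.ε b + S.ε c))
    (htf : ∀ a b c,
      S.Gup Gm a b c = - sgn ((S.ε b + 1) * (S.ε c + 1)) • S.Gup Gm a c b)
    (hRicForm : ∀ a b, (∑ c, sgn (S.ε c) • S.riem Gm a b c c) = 0) :
    ∀ a b,
      (∑ c, sgn (S.ε c * (S.ε a + S.ε c)) • S.riem Gm c a c b)
        = - sgn ((S.ε a + 1) * (S.ε b + 1)) •
            ∑ c, sgn (S.ε c * (S.ε b + S.ε c)) • S.riem Gm c b c a := by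
  intro a b
  rw [Finset.sum_congr rfl fun c _ => ricci_summand S Gm htf a b c, Finset.sum_sub_distrib,
    ← Finset.smul_sum, ← Finset.smul_sum, hRicForm, smul_zero, sub_zero]

end SuperAlg
end
end
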